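/- Let x0, x1, x2, x3 ∈ ℝ³ be affinely independent with barycentric coordinates λ_0, …, λ_3, edge tensors T_ij = (x_j − x_i)(x_j − x_i)ᵀ, and K = conv{x0, x1, x2, x3}, and let k ≥ 4 be an integer. Then there exists a constant C > 0 (depending only on K and k) such that for every polynomial vector field v : ℝ³ → ℝ³ of degree at most k − 1 with ∫_K v · r dx = 0 for every rigid motion r, there exists τ ∈ Σ_{K,b} with div τ = v on K and (∫_K |τ(x)|² dx)^{1/2} + (∫_K |div τ(x)|² dx)^{1/2} ≤ C (∫_K |v(x)|² dx)^{1/2}, where |τ(x)| is the Frobenius norm of the matrix τ(x). -/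

import Mathlib

/-!
The divergence maps edge bubbles onto the orthogonal complement of the rigid motions by a duality
argument. The derivative of `λ_i λ_j g` in the direction `x_j - x_i` integrates to zero over `K`
(`IsBarycentric.integral_dirDeriv_bubble`), by Fubini along lines parallel to the edge and the
fundamental theorem of calculus. This yields `∫ div τ · w = -∫ τ : ε(w)` for every edge bubble `τ`
(`IsBarycentric.tetraIntegral_bubbleDiv`). In particular `div τ` is orthogonal to rigid motions.

Conversely, let `w` of degree at most `k - 1` be orthogonal to all `div τ`. Testing with
`τ = λ_i λ_j (tᵀ ε(w) t) t tᵀ`, where `t = x_j - x_i`, gives `∫ λ_i λ_j (tᵀ ε(w) t)² = 0`, so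
`tᵀ ε(w) t = 0` for all six edges. Since the edge tensors span the symmetric matrices, `ε(w) = 0`,
and `w` is a rigid motion (`IsBarycentric.eq_rigid_of_orthogonal`). Surjectivity follows by
orthogonal projection, and the stability estimate is the boundedness of a linear right inverse
between finite-dimensional spaces (`exists_stable_preimage`). The constant is increased by one to
account for `‖div τ‖ = ‖v‖`.
-/

open Matrix MvPolynomial MeasureTheory

/-- The edge tensor `T_ij = (x_j − x_i)(x_j − x_i)ᵀ`. -/
noncomputable def edgeTensor (x : Fin 4 → Fin 3 → ℝ) (i j : Fin 4) :
    Matrix (Fin 3) (Fin 3) ℝ :=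
  Matrix.vecMulVec (x j - x i) (x j - x i)

/-- The `(l,m)` entry of the edge-bubble field `Σ_{i<j} λ_i λ_j p_ij T_ij`,
as a polynomial in the space variables. -/
noncomputable def bubbleEntry (x : Fin 4 → Fin 3 → ℝ)
    (lam : Fin 4 → MvPolynomial (Fin 3) ℝ)
    (p : {q : Fin 4 × Fin 4 // q.1 < q.2} → MvPolynomial (Fin 3) ℝ)
    (l m : Fin 3) : MvPolynomial (Fin 3) ℝ :=
  ∑ ij : {q : Fin 4 × Fin 4 // q.1 < q.2},
    lam ij.1.1 * lam ij.1.2 * p ij * C (edgeTensor x ij.1.1 ij.1.2 l m)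

/-- The `l`-th component of the row-wise divergence of the edge-bubble field. -/
noncomputable def bubbleDiv (x : Fin 4 → Fin 3 → ℝ)
    (lam : Fin 4 → MvPolynomial (Fin 3) ℝ)
    (p : {q : Fin 4 × Fin 4 // q.1 < q.2} → MvPolynomial (Fin 3) ℝ)
    (l : Fin 3) : MvPolynomial (Fin 3) ℝ :=
  ∑ m : Fin 3, pderiv m (bubbleEntry x lam p l m)

/-! ### Orthogonality and stability in finite dimension -/

theorem exists_bilin_bound {U : Type*} [NormedAddCommGroup U] [NormedSpace ℝ U]
    [FiniteDimensional ℝ U] (B : U →ₗ[ℝ] U →ₗ[ℝ] ℝ) :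
    ∃ M : ℝ, 0 ≤ M ∧ ∀ u, B u u ≤ M * ‖u‖ * ‖u‖ := by
  let B' : U →L[ℝ] U →L[ℝ] ℝ := LinearMap.toContinuousLinearMap
    ((LinearMap.toContinuousLinearMap (𝕜 := ℝ) (E := U) (F' := ℝ)).toLinearMap ∘ₗ B)
  exact ⟨‖B'‖, B'.opNorm_nonneg, fun u => (le_abs_self _).trans (B'.le_opNorm₂ u u)⟩

/-- If `D` maps into `Rᗮ` and everything orthogonal to the range of `D` lies in `R`, then `D` is
onto `Rᗮ`: the component `w` of `v ∈ Rᗮ` orthogonal to the range lies in `R`, hence is orthogonal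
to itself. The bound is the continuity of a linear right inverse on a finite-dimensional space. -/
theorem exists_stable_preimage {V P : Type*} [NormedAddCommGroup V] [InnerProductSpace ℝ V]
    [FiniteDimensional ℝ V] [AddCommGroup P] [Module ℝ P] (D : P →ₗ[ℝ] V) (R : Set V)
    (h1 : ∀ p, ∀ r ∈ R, inner ℝ (D p) r = 0)
    (h2 : ∀ w, (∀ p, inner ℝ (D p) w = 0) → w ∈ R) (c : P →ₗ[ℝ] P →ₗ[ℝ] ℝ) :
    ∃ M : ℝ, 0 < M ∧ ∀ v, (∀ r ∈ R, inner ℝ v r = 0) →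
      ∃ p, D p = v ∧ Real.sqrt (c p p) ≤ M * ‖v‖ := by
  have hrange : ∀ v, (∀ r ∈ R, inner ℝ v r = 0) → v ∈ LinearMap.range D := by
    intro v hv
    obtain ⟨u, hu, w, hw, rfl⟩ := (LinearMap.range D).exists_add_mem_mem_orthogonal v
    have hwR : w ∈ R := h2 w fun p => hw (D p) ⟨p, rfl⟩
    obtain ⟨p, rfl⟩ := hu
    have := hv w hwR
    rw [inner_add_left, h1 p w hwR, zero_add, inner_self_eq_zero] at this
    rw [this, add_zero]
    exact ⟨p, rfl⟩
  obtain ⟨S, hS⟩ := D.rangeRestrict.exists_rightInverse_of_surjective D.range_rangeRestrict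
  obtain ⟨N, hN, hB⟩ := exists_bilin_bound (c.compl₁₂ S S)
  refine ⟨Real.sqrt N + 1, by positivity, fun v hv => ?_⟩
  let u : LinearMap.range D := ⟨v, hrange v hv⟩
  refine ⟨S u, ?_, ?_⟩
  · have := LinearMap.congr_fun hS u
    exact congrArg Subtype.val this
  · have hb : c (S u) (S u) ≤ N * ‖v‖ * ‖v‖ :=
      hB u
    calc Real.sqrt (c (S u) (S u)) ≤ Real.sqrt (N * ‖v‖ * ‖v‖) := Real.sqrt_le_sqrt hb
      _ = Real.sqrt N * ‖v‖ := by
        rw [mul_assoc, Real.sqrt_mul hN, Real.sqrt_mul_self (norm_nonneg _)]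
      _ ≤ _ := by nlinarith [norm_nonneg v]

/-! ### Integration along parallel lines -/

/-- Fubini in the direction `t`: a function whose integral along every line parallel to `t`
vanishes has integral zero. -/
theorem integral_eq_zero_of_lines {f : (Fin 3 → ℝ) → ℝ} (hf : Integrable f)
    {t : Fin 3 → ℝ} (ht : t ≠ 0) (hline : ∀ y, ∫ s : ℝ, f (y + s • t) = 0) :
    ∫ y, f y = 0 := by
  obtain ⟨m, hm⟩ := Function.ne_iff.mp ht
  -- the shear sending the `m`-th basis vector to `t` and fixing the others
  let M : Matrix (Fin 3) (Fin 3) ℝ := (1 : Matrix (Fin 3) (Fin 3) ℝ).updateCol m t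
  have hdet : M.det ≠ 0 := by
    have : M.det = t m := by
      have := Matrix.cramer_apply (1 : Matrix (Fin 3) (Fin 3) ℝ) t m
      rw [Matrix.cramer_one] at this
      simpa [M] using this.symm
    rw [this]; exact hm
  have hmap := Real.map_matrix_volume_pi_eq_smul_volume_pi hdet
  have hmul : ∀ (s : ℝ) (r : Fin 2 → ℝ),
      Matrix.toLin' M (m.insertNth s r) = Matrix.toLin' M (m.insertNth 0 r) + s • t := by
    intro s r
    have h0 : (m.insertNth s r : Fin 3 → ℝ) = m.insertNth 0 r + s • Pi.single m 1 := by
      ext l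
      refine Fin.succAboveCases m ?_ (fun l => ?_) l <;> simp
    rw [h0, map_add, map_smul]
    congr 2
    ext l
    simp [M, Matrix.mulVec_single]
  have hmeas : Measurable (Matrix.toLin' M) :=
    (Matrix.toLin' M).continuous_of_finiteDimensional.measurable
  have hfm : Integrable f (Measure.map (Matrix.toLin' M) volume) := by
    rw [hmap]; exact hf.smul_measure ENNReal.ofReal_ne_top
  have hcomp : Integrable (f ∘ Matrix.toLin' M) :=
    (integrable_map_measure hfm.1 hmeas.aemeasurable).mp hfm
  have key : ∫ y, f (Matrix.toLin' M y) = 0 := by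
    have hp := (volume_preserving_piFinSuccAbove (fun _ : Fin 3 => ℝ) m).symm
    have h1 := hp.integral_comp' (g := f ∘ Matrix.toLin' M)
    have h2 := (hp.integrable_comp_emb (MeasurableEquiv.measurableEmbedding _)).mpr hcomp
    simp only [Function.comp_apply] at h1
    rw [← h1, Measure.volume_eq_prod]
    refine (integral_prod_symm _ h2).trans ?_
    refine (integral_congr_ae (Filter.Eventually.of_forall fun r => ?_)).trans (integral_zero _ _)
    refine Eq.trans ?_ (hline (Matrix.toLin' M (m.insertNth 0 r)))
    refine integral_congr_ae (Filter.Eventually.of_forall fun s => ?_)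
    simp only [← hmul]
    rfl
  rw [← integral_map hmeas.aemeasurable hfm.1, hmap, integral_smul_measure, smul_eq_zero] at key
  rcases key with h | h
  · rw [ENNReal.toReal_ofReal (abs_nonneg _), abs_eq_zero, inv_eq_zero] at h
    exact absurd h hdet
  · exact h

/-! ### Degrees and partial derivatives -/

theorem totalDegree_pderiv_le {n : ℕ} (f : MvPolynomial (Fin 3) ℝ) (m : Fin 3)
    (hf : f.totalDegree ≤ n + 1) : (pderiv m f).totalDegree ≤ n := by
  refine Finset.sup_le fun d hd => ?_
  rw [mem_support_iff, coeff_pderiv] at hd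
  have := (le_totalDegree (mem_support_iff.mpr (left_ne_zero_of_mul hd))).trans hf
  rw [Finsupp.sum_add_index' (fun _ => rfl) (fun _ _ _ => rfl), Finsupp.sum_single_index rfl] at this
  omega

theorem eq_C_of_pderiv_eq_zero (f : MvPolynomial (Fin 3) ℝ) (h : ∀ m, pderiv m f = 0) :
    f = C (coeff 0 f) := by
  ext d
  rw [coeff_C]
  split_ifs with hd
  · rw [hd]
  · obtain ⟨m, hm⟩ := Finsupp.ne_iff.mp (Ne.symm hd)
    have hd' : d = (d - Finsupp.single m 1) + Finsupp.single m 1 := by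
      ext i; by_cases hi : i = m
      · subst hi; simp at hm ⊢; omega
      · simp [Ne.symm hi]
    have := congrArg (coeff (d - Finsupp.single m 1)) (h m)
    rw [coeff_pderiv, coeff_zero, ← hd'] at this
    rcases mul_eq_zero.mp this with h | h
    · exact h
    · exfalso; norm_cast at h; 

/-- A polynomial of degree at most one is an affine function. -/
theorem eval_affine (f : MvPolynomial (Fin 3) ℝ) (hf : f.totalDegree ≤ 1) :
    ∃ (a : ℝ) (b : (Fin 3 → ℝ) →ₗ[ℝ] ℝ), ∀ y, eval y f = a + b y := by
  have hc : ∀ m, pderiv m f = C (coeff 0 (pderiv m f)) := fun m =>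
    totalDegree_eq_zero_iff_eq_C.mp (Nat.le_zero.mp (totalDegree_pderiv_le f m hf))
  have h := eq_C_of_pderiv_eq_zero (f - ∑ l, C (coeff 0 (pderiv l f)) * X l) (by
    intro m
    simp only [map_sub, map_sum, pderiv_C_mul, pderiv_X, Pi.single_apply]
    simpa [sub_eq_zero] using hc m)
  refine ⟨coeff 0 (f - ∑ l, C (coeff 0 (pderiv l f)) * X l),
    Fintype.linearCombination ℝ (fun l => coeff 0 (pderiv l f)), fun y => ?_⟩
  have := congrArg (eval y) h
  rw [map_sub, eval_C, sub_eq_iff_eq_add] at this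
  rw [this]
  simp [Fintype.linearCombination_apply, mul_comm]

/-! ### Barycentric coordinates -/

/-- The tetrahedron `K` with vertices `x 0, …, x 3`. -/
abbrev tetra (x : Fin 4 → Fin 3 → ℝ) : Set (Fin 3 → ℝ) :=
  convexHull ℝ {x 0, x 1, x 2, x 3}

/-- The family `lam` consists of the barycentric coordinates of a nondegenerate tetrahedron with
vertices `x`. -/
structure IsBarycentric (x : Fin 4 → Fin 3 → ℝ) (lam : Fin 4 → MvPolynomial (Fin 3) ℝ) :
    Prop where
  indep : LinearIndependent ℝ ![x 1 - x 0, x 2 - x 0, x 3 - x 0]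
  deg : ∀ m, (lam m).totalDegree ≤ 1
  delta : ∀ m l, eval (x l) (lam m) = if m = l then 1 else 0

theorem isCompact_tetra (x : Fin 4 → Fin 3 → ℝ) : IsCompact (tetra x) :=
  (Set.toFinite ({x 0, x 1, x 2, x 3} : Set (Fin 3 → ℝ))).isCompact_convexHull ℝ

theorem integrableOn_eval (x : Fin 4 → Fin 3 → ℝ) (f : MvPolynomial (Fin 3) ℝ) :
    IntegrableOn (fun y => eval y f) (tetra x) :=
  (MvPolynomial.continuous_eval f).continuousOn.integrableOn_compact (isCompact_tetra x)

namespace IsBarycentric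

variable {x : Fin 4 → Fin 3 → ℝ} {lam : Fin 4 → MvPolynomial (Fin 3) ℝ}

/-- Along the edge direction `x j - x i`, the coordinate `lam j` grows at unit rate, `lam i`
decreases at unit rate, and the two others are constant. -/
theorem eval_line (h : IsBarycentric x lam) (m i j : Fin 4) (y : Fin 3 → ℝ) (s : ℝ) :
    eval (y + s • (x j - x i)) (lam m) =
      eval y (lam m) + s * ((if m = j then 1 else 0) - (if m = i then 1 else 0)) := by
  obtain ⟨a, b, hab⟩ := eval_affine (lam m) (h.deg m)
  rw [← h.delta m i, ← h.delta m j, hab, hab, hab, hab]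
  simp only [map_add, map_smul, map_sub, smul_eq_mul]
  ring

theorem exists_coord (h : IsBarycentric x lam) (y : Fin 3 → ℝ) :
    ∃ c : Fin 3 → ℝ, y = x 0 + c 0 • (x 1 - x 0) + c 1 • (x 2 - x 0) + c 2 • (x 3 - x 0) := by
  have hs := h.indep.span_eq_top_of_card_eq_finrank' (by simp)
  have hy : y - x 0 ∈ Submodule.span ℝ (Set.range ![x 1 - x 0, x 2 - x 0, x 3 - x 0]) := by
    rw [hs]; trivial
  obtain ⟨c, hc⟩ := (Submodule.mem_span_range_iff_exists_fun ℝ).mp hy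
  refine ⟨c, ?_⟩
  simp [Fin.sum_univ_three] at hc
  rw [add_assoc, add_assoc, ← add_assoc (c 0 • _), hc]
  simp

theorem sum_eval (h : IsBarycentric x lam) (y : Fin 3 → ℝ) :
    ∑ m, eval y (lam m) = 1 ∧ ∑ m, eval y (lam m) • x m = y := by
  obtain ⟨c, rfl⟩ := h.exists_coord y
  simp only [Fin.sum_univ_four, h.eval_line, h.delta]
  constructor
  · simp
    ring
  · simp
    module

theorem mem_tetra_iff (h : IsBarycentric x lam) (y : Fin 3 → ℝ) :
    y ∈ tetra x ↔ ∀ m, 0 ≤ eval y (lam m) := by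
  constructor
  · intro hy m
    obtain ⟨a, b, hab⟩ := eval_affine (lam m) (h.deg m)
    have hconv : Convex ℝ {z | -a ≤ b z} := convex_halfSpace_ge b.isLinear (-a)
    have hsub : ({x 0, x 1, x 2, x 3} : Set (Fin 3 → ℝ)) ⊆ {z | -a ≤ b z} := by
      have hl : ∀ l, -a ≤ b (x l) := by
        intro l
        have h1 := h.delta m l
        rw [hab] at h1
        split_ifs at h1 <;> linarith
      rintro z (rfl | rfl | rfl | rfl) <;> exact hl _
    have := convexHull_min hsub hconv hy
    rw [hab]
    have : -a ≤ b y := this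
    linarith
  · intro hy
    obtain ⟨h1, h2⟩ := h.sum_eval y
    rw [← h2]
    refine (convex_convexHull ℝ _).sum_mem (fun m _ => hy m) h1 fun m _ => subset_convexHull ℝ _ ?_
    fin_cases m <;> simp

/-- A polynomial that is nonnegative on `K` with zero integral vanishes on the interior of `K`,
hence identically. -/
theorem eq_zero_of_integral_eq_zero (h : IsBarycentric x lam) (g : MvPolynomial (Fin 3) ℝ)
    (hg : ∀ y ∈ tetra x, 0 ≤ eval y g) (hint : ∫ y in tetra x, eval y g = 0) : g = 0 := by
  have hms : MeasurableSet (tetra x) := (isCompact_tetra x).isClosed.measurableSet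
  have hae : (fun y => eval y g) =ᵐ[volume.restrict (tetra x)] 0 := by
    refine (setIntegral_eq_zero_iff_of_nonneg_ae ?_ (integrableOn_eval x g)).mp hint
    exact (ae_restrict_iff' hms).mpr (Filter.Eventually.of_forall hg)
  let U : Set (Fin 3 → ℝ) := ⋂ m, {y | 0 < eval y (lam m)}
  have hU : IsOpen U := isOpen_iInter_of_finite fun m =>
    isOpen_lt continuous_const (MvPolynomial.continuous_eval _)
  have hUK : U ⊆ tetra x := fun y hy =>
    (h.mem_tetra_iff y).mpr fun m => le_of_lt (Set.mem_iInter.mp hy m)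
  have hUne : ∃ y, y ∈ U := by
    refine ⟨x 0 + (1 / 4 : ℝ) • (x 1 - x 0) + (1 / 4 : ℝ) • (x 2 - x 0)
      + (1 / 4 : ℝ) • (x 3 - x 0), Set.mem_iInter.mpr fun m => ?_⟩
    rw [Set.mem_ofPred_eq, h.eval_line, h.eval_line, h.eval_line, h.delta]
    fin_cases m <;> norm_num [Fin.ext_iff]
  have heq : Set.EqOn (fun y => eval y g) 0 U :=
    Measure.eqOn_open_of_ae_eq (ae_mono (Measure.restrict_mono hUK le_rfl) hae) hU
      (MvPolynomial.continuous_eval g).continuousOn continuousOn_const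
  obtain ⟨z, hz⟩ := hUne
  obtain ⟨ε, hε, hball⟩ := Metric.isOpen_iff.mp hU z hz
  refine MvPolynomial.funext_set (fun m => Metric.ball (z m) ε) (fun m => ?_) fun y hy => ?_
  · rw [Real.ball_eq_Ioo]
    exact Set.Ioo_infinite (by linarith)
  · rw [map_zero]
    exact heq (hball (by rw [ball_pi z hε]; exact hy))

end IsBarycentric

/-! ### Directional derivatives and integration by parts -/

/-- The derivative of polynomials in the constant direction `t`. -/
noncomputable def dirDeriv (t : Fin 3 → ℝ) :
    Derivation ℝ (MvPolynomial (Fin 3) ℝ) (MvPolynomial (Fin 3) ℝ) :=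
  mkDerivation ℝ fun m => C (t m)

theorem dirDeriv_eq_sum (t : Fin 3 → ℝ) (f : MvPolynomial (Fin 3) ℝ) :
    dirDeriv t f = ∑ m, C (t m) * pderiv m f := by
  induction f using MvPolynomial.induction_on with
  | C a => simp [dirDeriv]
  | add f g hf hg => simp only [map_add, hf, hg, mul_add, Finset.sum_add_distrib]
  | mul_X f m hf =>
    simp only [Derivation.leibniz, hf, smul_eq_mul, pderiv_X, mul_add, Finset.sum_add_distrib,
      Finset.mul_sum]
    congr 1
    · simp [dirDeriv, mkDerivation_X, Pi.single_apply, mul_comm]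
    · exact Finset.sum_congr rfl fun l _ => by ring

theorem hasDerivAt_eval_line (t y : Fin 3 → ℝ) (f : MvPolynomial (Fin 3) ℝ) (s : ℝ) :
    HasDerivAt (fun s : ℝ => eval (y + s • t) f) (eval (y + s • t) (dirDeriv t f)) s := by
  induction f using MvPolynomial.induction_on with
  | C a => simpa [dirDeriv] using hasDerivAt_const s a
  | add f g hf hg =>
    simp only [map_add]
    exact hf.add hg
  | mul_X f m hf =>
    have hX : HasDerivAt (fun s : ℝ => y m + s * t m) (t m) s := by
      simpa using ((hasDerivAt_id s).mul_const (t m)).const_add (y m)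
    have := hf.mul hX
    simp only [Derivation.leibniz, map_mul, eval_X, map_add, smul_eq_mul]
    have hXt : eval (y + s • t) (dirDeriv t (X m)) = t m := by simp [dirDeriv, mkDerivation_X]
    rw [hXt]
    rw [add_comm, mul_comm ((y + s • t) m)]
    exact this

namespace IsBarycentric

variable {x : Fin 4 → Fin 3 → ℝ} {lam : Fin 4 → MvPolynomial (Fin 3) ℝ}

/-- The edge-direction derivative of `lam i * lam j * g` integrates to zero over `K`: a line parallel
to the edge meets `K` in a segment whose end points lie on the faces `lam j = 0` and `lam i = 0`,
where the differentiated function vanishes. -/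
theorem integral_dirDeriv_bubble (h : IsBarycentric x lam) {i j : Fin 4} (hij : i ≠ j)
    (g : MvPolynomial (Fin 3) ℝ) :
    ∫ y in tetra x, eval y (dirDeriv (x j - x i) (lam i * lam j * g)) = 0 := by
  have hms : MeasurableSet (tetra x) := (isCompact_tetra x).isClosed.measurableSet
  have ht : x j - x i ≠ 0 := by
    intro h0
    have h1 := h.delta j i
    rw [← sub_eq_zero.mp h0, h.delta] at h1
    simp [hij.symm] at h1
  rw [← integral_indicator hms]
  refine integral_eq_zero_of_lines ((integrable_indicator_iff hms).mpr (integrableOn_eval x _)) ht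
    fun y => ?_
  set F := dirDeriv (x j - x i) (lam i * lam j * g) with hF
  -- the line `y + s t` lies in `K` exactly for `-lam j ≤ s ≤ lam i`, provided the two coordinates
  -- that are constant along it are nonnegative
  have hmem : ∀ s : ℝ, y + s • (x j - x i) ∈ tetra x ↔
      (∀ m, m ≠ i → m ≠ j → 0 ≤ eval y (lam m)) ∧
        s ∈ Set.Icc (-eval y (lam j)) (eval y (lam i)) := by
    intro s
    simp only [h.mem_tetra_iff, h.eval_line, Set.mem_Icc]
    constructor
    · intro hs
      refine ⟨fun m hmi hmj => by simpa [hmi, hmj] using hs m, ?_, ?_⟩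
      · have := hs j
        simp [hij.symm] at this
        linarith
      · have := hs i
        simp [hij] at this
        linarith
    · rintro ⟨h1, h2, h3⟩ m
      by_cases hmi : m = i
      · subst hmi; simp [hij]; linarith
      · by_cases hmj : m = j
        · subst hmj; simp [hij.symm]; linarith
        · simpa [hmi, hmj] using h1 m hmi hmj
  by_cases hcase : (∀ m, m ≠ i → m ≠ j → 0 ≤ eval y (lam m)) ∧
      -eval y (lam j) ≤ eval y (lam i)
  · have hrew : (fun s : ℝ => (tetra x).indicator (fun y => eval y F) (y + s • (x j - x i))) =
        (Set.Icc (-eval y (lam j)) (eval y (lam i))).indicator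
          (fun s => eval (y + s • (x j - x i)) F) := by
      funext s
      have hs : y + s • (x j - x i) ∈ tetra x ↔
          s ∈ Set.Icc (-eval y (lam j)) (eval y (lam i)) :=
        (hmem s).trans (and_iff_right hcase.1)
      by_cases hsI : s ∈ Set.Icc (-eval y (lam j)) (eval y (lam i))
      · rw [Set.indicator_of_mem hsI, Set.indicator_of_mem (hs.mpr hsI)]
      · rw [Set.indicator_of_notMem hsI, Set.indicator_of_notMem (mt hs.mp hsI)]
    rw [hrew, integral_indicator measurableSet_Icc, integral_Icc_eq_integral_Ioc,
      ← intervalIntegral.integral_of_le hcase.2,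
      intervalIntegral.integral_eq_sub_of_hasDerivAt
        (fun s _ => hasDerivAt_eval_line (x j - x i) y (lam i * lam j * g) s)]
    · simp only [map_mul, h.eval_line, if_pos, if_neg hij, if_neg hij.symm]
      ring
    · refine Continuous.intervalIntegrable ?_ _ _
      exact (MvPolynomial.continuous_eval _).comp (by fun_prop)
  · have hrew : (fun s : ℝ => (tetra x).indicator (fun y => eval y F) (y + s • (x j - x i))) =
        fun _ => 0 := by
      funext s
      refine Set.indicator_of_notMem (fun hs => hcase ?_) _
      obtain ⟨h1, h2, h3⟩ := (hmem s).mp hs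
      exact ⟨h1, h2.trans h3⟩
    rw [hrew, integral_zero]

end IsBarycentric

/-- Integration of polynomials over `K`, as a linear functional. -/
noncomputable def tetraIntegral (x : Fin 4 → Fin 3 → ℝ) : MvPolynomial (Fin 3) ℝ →ₗ[ℝ] ℝ where
  toFun f := ∫ y in tetra x, eval y f
  map_add' f g := by
    simp only [map_add]
    exact integral_add (integrableOn_eval x f) (integrableOn_eval x g)
  map_smul' c f := by
    simp only [smul_eval, RingHom.id_apply, smul_eq_mul]
    exact integral_const_mul _ _

theorem tetraIntegral_apply (x : Fin 4 → Fin 3 → ℝ) (f : MvPolynomial (Fin 3) ℝ) :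
    tetraIntegral x f = ∫ y in tetra x, eval y f := rfl

/-- The six edges of the tetrahedron, as increasing pairs of vertex indices. -/
abbrev Edge : Type := {q : Fin 4 × Fin 4 // q.1 < q.2}

/-- `bubbleEntry` as a linear map of the coefficient polynomials. -/
noncomputable def bubbleEntryLin (x : Fin 4 → Fin 3 → ℝ) (lam : Fin 4 → MvPolynomial (Fin 3) ℝ)
    (l m : Fin 3) : (Edge → MvPolynomial (Fin 3) ℝ) →ₗ[ℝ] MvPolynomial (Fin 3) ℝ where
  toFun p := bubbleEntry x lam p l m
  map_add' p q := by
    simp only [bubbleEntry, Pi.add_apply, mul_add, add_mul, Finset.sum_add_distrib]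
  map_smul' c p := by
    simp only [bubbleEntry, Pi.smul_apply, Finset.smul_sum, RingHom.id_apply, mul_smul_comm,
      smul_mul_assoc]

/-- `bubbleDiv` as a linear map of the coefficient polynomials. -/
noncomputable def bubbleDivLin (x : Fin 4 → Fin 3 → ℝ) (lam : Fin 4 → MvPolynomial (Fin 3) ℝ)
    (l : Fin 3) : (Edge → MvPolynomial (Fin 3) ℝ) →ₗ[ℝ] MvPolynomial (Fin 3) ℝ :=
  ∑ m : Fin 3, (pderiv m).toLinearMap ∘ₗ bubbleEntryLin x lam l m

theorem bubbleDivLin_apply (x : Fin 4 → Fin 3 → ℝ) (lam : Fin 4 → MvPolynomial (Fin 3) ℝ)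
    (l : Fin 3) (p : Edge → MvPolynomial (Fin 3) ℝ) :
    bubbleDivLin x lam l p = bubbleDiv x lam p l := by
  simp only [bubbleDivLin, LinearMap.sum_apply]
  rfl

/-- The component `tᵀ ε(w) t` of the symmetric gradient `ε(w)`, written as the derivative in the
direction `t` of `t · w`. -/
noncomputable def strain (t : Fin 3 → ℝ) (w : Fin 3 → MvPolynomial (Fin 3) ℝ) :
    MvPolynomial (Fin 3) ℝ :=
  dirDeriv t (∑ l, C (t l) * w l)

theorem strain_eq_sum (t : Fin 3 → ℝ) (w : Fin 3 → MvPolynomial (Fin 3) ℝ) :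
    strain t w = ∑ m, ∑ l, C (t m * t l) * pderiv m (w l) := by
  simp only [strain, dirDeriv_eq_sum, map_sum, pderiv_C_mul, C_mul, mul_assoc]
  exact Finset.sum_comm

theorem bubbleDiv_eq (x : Fin 4 → Fin 3 → ℝ) (lam : Fin 4 → MvPolynomial (Fin 3) ℝ)
    (p : Edge → MvPolynomial (Fin 3) ℝ) (l : Fin 3) :
    bubbleDiv x lam p l = ∑ ij : Edge, C ((x ij.1.2 - x ij.1.1) l) *
      dirDeriv (x ij.1.2 - x ij.1.1) (lam ij.1.1 * lam ij.1.2 * p ij) := by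
  simp only [bubbleDiv, bubbleEntry, map_sum, dirDeriv_eq_sum, edgeTensor]
  rw [Finset.sum_comm]
  refine Finset.sum_congr rfl fun ij _ => ?_
  rw [Finset.mul_sum]
  refine Finset.sum_congr rfl fun m _ => ?_
  rw [mul_comm, pderiv_C_mul, Matrix.vecMulVec_apply, C_mul, mul_assoc]

theorem totalDegree_bubbleDiv_le {x : Fin 4 → Fin 3 → ℝ} {lam : Fin 4 → MvPolynomial (Fin 3) ℝ}
    (h : IsBarycentric x lam) {k : ℕ} (hk : 4 ≤ k) (p : Edge → MvPolynomial (Fin 3) ℝ)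
    (hp : ∀ ij, (p ij).totalDegree ≤ k - 2) (l : Fin 3) :
    (bubbleDiv x lam p l).totalDegree ≤ k - 1 := by
  refine totalDegree_finsetSum_le fun m _ => totalDegree_pderiv_le _ m ?_
  refine totalDegree_finsetSum_le fun ij _ => ?_
  refine (totalDegree_mul _ _).trans ?_
  rw [totalDegree_C]
  have h1 := totalDegree_mul (lam ij.1.1 * lam ij.1.2) (p ij)
  have h2 := totalDegree_mul (lam ij.1.1) (lam ij.1.2)
  have h3 := h.deg ij.1.1
  have h4 := h.deg ij.1.2
  have h5 := hp ij
  omega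

theorem totalDegree_strain_le {n : ℕ} (t : Fin 3 → ℝ) (w : Fin 3 → MvPolynomial (Fin 3) ℝ)
    (hw : ∀ l, (w l).totalDegree ≤ n + 1) : (strain t w).totalDegree ≤ n := by
  rw [strain_eq_sum]
  refine totalDegree_finsetSum_le fun m _ => totalDegree_finsetSum_le fun l _ => ?_
  refine (totalDegree_mul _ _).trans ?_
  rw [totalDegree_C, zero_add]
  exact totalDegree_pderiv_le _ m (hw l)

namespace IsBarycentric

variable {x : Fin 4 → Fin 3 → ℝ} {lam : Fin 4 → MvPolynomial (Fin 3) ℝ}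

/-- Integration by parts without boundary terms: `∫ div τ · w = -∫ τ : ε(w)` for an edge bubble
`τ`. -/
theorem tetraIntegral_bubbleDiv (h : IsBarycentric x lam) (p : Edge → MvPolynomial (Fin 3) ℝ)
    (w : Fin 3 → MvPolynomial (Fin 3) ℝ) :
    tetraIntegral x (∑ l, bubbleDiv x lam p l * w l) =
      -∑ ij : Edge, tetraIntegral x
        (lam ij.1.1 * lam ij.1.2 * p ij * strain (x ij.1.2 - x ij.1.1) w) := by
  have hsum : ∑ l, bubbleDiv x lam p l * w l = ∑ ij : Edge,
      (dirDeriv (x ij.1.2 - x ij.1.1) (lam ij.1.1 * lam ij.1.2 *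
          (p ij * ∑ l, C ((x ij.1.2 - x ij.1.1) l) * w l)) -
        lam ij.1.1 * lam ij.1.2 * p ij * strain (x ij.1.2 - x ij.1.1) w) := by
    simp only [bubbleDiv_eq, Finset.sum_mul]
    rw [Finset.sum_comm]
    refine Finset.sum_congr rfl fun ij _ => ?_
    rw [← mul_assoc (lam _ * lam _), Derivation.leibniz _ (lam _ * lam _ * p ij), strain,
      smul_eq_mul, smul_eq_mul, add_sub_cancel_left, Finset.sum_mul]
    exact Finset.sum_congr rfl fun l _ => by ring
  rw [hsum, map_sum, ← Finset.sum_neg_distrib]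
  refine Finset.sum_congr rfl fun ij _ => ?_
  rw [map_sub, tetraIntegral_apply, h.integral_dirDeriv_bubble ij.2.ne, zero_sub]

/-- The edge tensors span the symmetric matrices: a symmetric gradient whose component along each
of the six edges is zero vanishes. Polarization, applied at each point, gives
`(x a - x 0)ᵀ ε (x b - x 0) = 0` for the basis `x a - x 0`. -/
theorem symGrad_eq_zero (h : IsBarycentric x lam) (w : Fin 3 → MvPolynomial (Fin 3) ℝ)
    (hw : ∀ ij : Edge, strain (x ij.1.2 - x ij.1.1) w = 0) (l m : Fin 3) :
    pderiv l (w m) + pderiv m (w l) = 0 := by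
  refine MvPolynomial.funext fun y => ?_
  let E : Matrix (Fin 3) (Fin 3) ℝ := Matrix.of fun l m => eval y (pderiv l (w m) + pderiv m (w l))
  let B : (Fin 3 → ℝ) →ₗ[ℝ] (Fin 3 → ℝ) →ₗ[ℝ] ℝ := Matrix.toLinearMap₂' ℝ E
  have hBapp : ∀ s t, B s t = ∑ l, ∑ m, s l * t m * E l m := by
    intro s t
    simp [B, Matrix.toLinearMap₂'_apply, mul_assoc]
  have hsymm : ∀ s t, B s t = B t s := by
    intro s t
    rw [hBapp, hBapp, Finset.sum_comm]
    refine Finset.sum_congr rfl fun l _ => Finset.sum_congr rfl fun m _ => ?_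
    simp only [E, Matrix.of_apply, map_add]
    ring
  have hquad : ∀ t, B t t = 2 * eval y (strain t w) := by
    intro t
    have h1 : eval y (strain t w) = ∑ l, ∑ m, t l * t m * eval y (pderiv l (w m)) := by
      simp [strain_eq_sum]
    have h2 : eval y (strain t w) = ∑ l, ∑ m, t l * t m * eval y (pderiv m (w l)) := by
      rw [h1, Finset.sum_comm]
      simp only [mul_comm (t _) (t _)]
    rw [two_mul]
    nth_rw 1 [h1]
    rw [h2, hBapp]
    simp only [← Finset.sum_add_distrib, E, Matrix.of_apply, map_add, mul_add]
  have hlt : ∀ i j : Fin 4, i < j → B (x j - x i) (x j - x i) = 0 := by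
    intro i j hij
    rw [hquad, hw ⟨(i, j), hij⟩, map_zero, mul_zero]
  have hedge : ∀ i j : Fin 4, B (x j - x i) (x j - x i) = 0 := by
    intro i j
    rcases lt_trichotomy i j with hij | rfl | hij
    · exact hlt i j hij
    · simp
    · rw [← neg_sub (x i) (x j)]
      rw [map_neg, map_neg, LinearMap.neg_apply, neg_neg]
      exact hlt j i hij
  have hvec : ![x 1 - x 0, x 2 - x 0, x 3 - x 0] = fun a : Fin 3 => x a.succ - x 0 := by
    funext a
    fin_cases a <;> rfl
  have hspan := h.indep.span_eq_top_of_card_eq_finrank' (by simp)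
  rw [hvec] at hspan
  have hB : B = 0 := by
    refine LinearMap.ext_on_range hspan fun a => LinearMap.ext_on_range hspan fun b => ?_
    have h1 := hedge a.succ b.succ
    have h2 := hedge 0 a.succ
    have h3 := hedge 0 b.succ
    rw [← sub_sub_sub_cancel_right (x b.succ) (x a.succ) (x 0)] at h1
    simp only [map_sub, LinearMap.sub_apply, LinearMap.zero_apply] at h1 h2 h3 ⊢
    have h4 := hsymm (x a.succ) (x b.succ)
    have h5 := hsymm (x a.succ) (x 0)
    have h6 := hsymm (x b.succ) (x 0)
    linarith
  have : E l m = B (Pi.single l 1) (Pi.single m 1) := by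
    rw [hBapp]
    simp [Pi.single_apply]
  rw [hB] at this
  simpa [E] using this

end IsBarycentric

/-! ### Rigid motions -/

theorem pderiv_comm (a b : Fin 3) (f : MvPolynomial (Fin 3) ℝ) :
    pderiv a (pderiv b f) = pderiv b (pderiv a f) := by
  ext d
  simp only [coeff_pderiv]
  by_cases hab : a = b
  · rw [hab]
  · rw [add_right_comm]
    simp [hab, Ne.symm hab]
    ring

/-- The affine field `y ↦ a + W y` with polynomial components; it is a rigid motion when `W` is
skew-symmetric. -/
noncomputable def rigid (a : Fin 3 → ℝ) (W : Matrix (Fin 3) (Fin 3) ℝ) (l : Fin 3) :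
    MvPolynomial (Fin 3) ℝ :=
  C (a l) + ∑ m, C (W l m) * X m

theorem eval_rigid (a : Fin 3 → ℝ) (W : Matrix (Fin 3) (Fin 3) ℝ) (l : Fin 3) (y : Fin 3 → ℝ) :
    eval y (rigid a W l) = a l + (W *ᵥ y) l := by
  simp [rigid, Matrix.mulVec, dotProduct]

theorem pderiv_rigid (a : Fin 3 → ℝ) (W : Matrix (Fin 3) (Fin 3) ℝ) (l m : Fin 3) :
    pderiv m (rigid a W l) = C (W l m) := by
  simp [rigid, pderiv_X, Pi.single_apply]

theorem strain_rigid (t a : Fin 3 → ℝ) {W : Matrix (Fin 3) (Fin 3) ℝ} (hW : Wᵀ = -W) :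
    strain t (rigid a W) = 0 := by
  have hs : strain t (rigid a W) = -strain t (rigid a W) := by
    simp only [strain_eq_sum, pderiv_rigid, ← Finset.sum_neg_distrib]
    rw [Finset.sum_comm]
    refine Finset.sum_congr rfl fun m _ => Finset.sum_congr rfl fun l _ => ?_
    have : W m l = -W l m := by simpa using congrFun (congrFun hW l) m
    rw [this, C_neg, mul_comm (t l)]
    ring
  exact self_eq_neg.mp hs

/-- The kernel of the symmetric gradient consists of rigid motions. The second derivatives
`∂_a ∂_b w_c` are symmetric in `a, b` and antisymmetric in `b, c`, hence zero, so the gradient of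
`w` is constant. -/
theorem eq_rigid_of_symGrad_eq_zero (w : Fin 3 → MvPolynomial (Fin 3) ℝ)
    (hw : ∀ l m, pderiv l (w m) + pderiv m (w l) = 0) :
    ∃ (a : Fin 3 → ℝ) (W : Matrix (Fin 3) (Fin 3) ℝ), Wᵀ = -W ∧ w = rigid a W := by
  have hanti : ∀ a b c, pderiv a (pderiv b (w c)) = -pderiv a (pderiv c (w b)) := by
    intro a b c
    rw [eq_neg_iff_add_eq_zero, ← map_add, hw, map_zero]
  have hzero : ∀ a b c, pderiv a (pderiv b (w c)) = 0 := by
    intro a b c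
    refine self_eq_neg.mp ?_
    calc pderiv a (pderiv b (w c)) = -pderiv c (pderiv a (w b)) := by rw [hanti, pderiv_comm]
      _ = pderiv b (pderiv c (w a)) := by rw [hanti, neg_neg, pderiv_comm]
      _ = -pderiv a (pderiv b (w c)) := by rw [hanti, pderiv_comm]
  let W : Matrix (Fin 3) (Fin 3) ℝ := Matrix.of fun l m => coeff 0 (pderiv m (w l))
  have hgrad : ∀ l m, pderiv m (w l) = C (W l m) := fun l m =>
    eq_C_of_pderiv_eq_zero _ fun a => hzero a m l
  refine ⟨fun l => coeff 0 (w l - rigid 0 W l), W, ?_, ?_⟩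
  · ext l m
    have := congrArg (coeff 0) (hw l m)
    rw [coeff_add, coeff_zero] at this
    exact eq_neg_of_add_eq_zero_left this
  · funext l
    have := eq_C_of_pderiv_eq_zero (w l - rigid 0 W l) fun m => by
      rw [map_sub, pderiv_rigid, hgrad, sub_self]
    rw [sub_eq_iff_eq_add] at this
    refine this.trans ?_
    simp [rigid]

/-! ### The divergence between finite-dimensional spaces -/

/-- The `L²(K)` inner product (Frobenius on matrices) of the edge bubbles with given coefficient
polynomials. -/
noncomputable def bubbleGram (x : Fin 4 → Fin 3 → ℝ) (lam : Fin 4 → MvPolynomial (Fin 3) ℝ) :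
    (Edge → MvPolynomial (Fin 3) ℝ) →ₗ[ℝ] (Edge → MvPolynomial (Fin 3) ℝ) →ₗ[ℝ] ℝ :=
  ∑ l, ∑ m, ((LinearMap.mul ℝ (MvPolynomial (Fin 3) ℝ)).compr₂ (tetraIntegral x)).compl₁₂
    (bubbleEntryLin x lam l m) (bubbleEntryLin x lam l m)

theorem bubbleGram_self (x : Fin 4 → Fin 3 → ℝ) (lam : Fin 4 → MvPolynomial (Fin 3) ℝ)
    (p : Edge → MvPolynomial (Fin 3) ℝ) :
    bubbleGram x lam p p =
      ∫ y in tetra x, ∑ l : Fin 3, ∑ m : Fin 3, (eval y (bubbleEntry x lam p l m)) ^ 2 := by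
  have h : bubbleGram x lam p p =
      tetraIntegral x (∑ l, ∑ m, bubbleEntry x lam p l m * bubbleEntry x lam p l m) := by
    simp only [bubbleGram, LinearMap.sum_apply, map_sum]
    rfl
  rw [h, tetraIntegral_apply]
  simp only [map_sum, map_mul, sq]

/-- Polynomial vector fields of degree at most `n`. -/
abbrev PolyField (n : ℕ) : Type := Fin 3 → restrictTotalDegree (Fin 3) ℝ n

/-- The `L²(K)` inner product on polynomial vector fields. -/
@[reducible]
noncomputable def polyFieldCore {x : Fin 4 → Fin 3 → ℝ} {lam : Fin 4 → MvPolynomial (Fin 3) ℝ}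
    (h : IsBarycentric x lam) (n : ℕ) : InnerProductSpace.Core ℝ (PolyField n) where
  inner v w := tetraIntegral x (∑ l, (v l : MvPolynomial (Fin 3) ℝ) * w l)
  conj_inner_symm v w := by
    simp only [conj_trivial, mul_comm]
  re_inner_nonneg v := by
    have hnn : 0 ≤ tetraIntegral x (∑ l, (v l : MvPolynomial (Fin 3) ℝ) * v l) := by
      rw [tetraIntegral_apply]
      refine integral_nonneg fun y => ?_
      simp only [map_sum, map_mul]
      exact Finset.sum_nonneg fun l _ => mul_self_nonneg _
    exact hnn
  add_left u v w := by
    simp only [Pi.add_apply, Submodule.coe_add, add_mul, Finset.sum_add_distrib, map_add]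
  smul_left v w r := by
    simp only [Pi.smul_apply, Submodule.coe_smul, smul_mul_assoc, ← Finset.smul_sum, map_smul,
      conj_trivial, smul_eq_mul]
  definite v hv := by
    have h0 := h.eq_zero_of_integral_eq_zero _ (fun y _ => by
      simp only [map_sum, map_mul]
      exact Finset.sum_nonneg fun l _ => mul_self_nonneg _) hv
    funext l
    refine Subtype.ext (MvPolynomial.funext fun y => ?_)
    have hy := congrArg (eval y) h0
    simp only [map_sum, map_mul, map_zero] at hy
    have := (Finset.sum_eq_zero_iff_of_nonneg fun l _ => mul_self_nonneg _).mp hy l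
      (Finset.mem_univ l)
    simpa using this

/-- The divergence of edge bubbles, as a map from coefficients of degree at most `k - 2` to fields
of degree at most `k - 1`. -/
noncomputable def bubbleDivRestrict {x : Fin 4 → Fin 3 → ℝ}
    {lam : Fin 4 → MvPolynomial (Fin 3) ℝ} (h : IsBarycentric x lam) {k : ℕ} (hk : 4 ≤ k) :
    (Edge → restrictTotalDegree (Fin 3) ℝ (k - 2)) →ₗ[ℝ] PolyField (k - 1) :=
  LinearMap.pi fun l => LinearMap.codRestrict _
    (bubbleDivLin x lam l ∘ₗ (Submodule.subtype _).compLeft Edge) fun p => by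
      rw [mem_restrictTotalDegree, LinearMap.comp_apply, bubbleDivLin_apply]
      exact totalDegree_bubbleDiv_le h hk _
        (fun ij => (mem_restrictTotalDegree _ _ _).mp (p ij).2) l

theorem bubbleDivRestrict_apply {x : Fin 4 → Fin 3 → ℝ}
    {lam : Fin 4 → MvPolynomial (Fin 3) ℝ} (h : IsBarycentric x lam) {k : ℕ} (hk : 4 ≤ k)
    (p : Edge → restrictTotalDegree (Fin 3) ℝ (k - 2)) (l : Fin 3) :
    (bubbleDivRestrict h hk p l : MvPolynomial (Fin 3) ℝ) =
      bubbleDiv x lam (fun ij => (p ij : MvPolynomial (Fin 3) ℝ)) l :=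
  bubbleDivLin_apply x lam l _

/-- A field orthogonal to the divergence of every edge bubble is a rigid motion: the bubble on the
edge `t` with coefficient `tᵀ ε(w) t` gives `∫ lam i * lam j * (tᵀ ε(w) t)² = 0`. -/
theorem IsBarycentric.eq_rigid_of_orthogonal {x : Fin 4 → Fin 3 → ℝ}
    {lam : Fin 4 → MvPolynomial (Fin 3) ℝ} (h : IsBarycentric x lam) {n : ℕ}
    (w : Fin 3 → MvPolynomial (Fin 3) ℝ) (hw : ∀ l, (w l).totalDegree ≤ n + 1)
    (horth : ∀ p : Edge → MvPolynomial (Fin 3) ℝ, (∀ ij, (p ij).totalDegree ≤ n) →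
      tetraIntegral x (∑ l, bubbleDiv x lam p l * w l) = 0) :
    ∃ (a : Fin 3 → ℝ) (W : Matrix (Fin 3) (Fin 3) ℝ), Wᵀ = -W ∧ w = rigid a W := by
  refine eq_rigid_of_symGrad_eq_zero w (h.symGrad_eq_zero w fun ij => ?_)
  set q := strain (x ij.1.2 - x ij.1.1) w with hq
  have h1 := horth (Pi.single ij q) fun e => by
    by_cases he : e = ij
    · subst he
      rw [Pi.single_eq_same]
      exact totalDegree_strain_le _ w hw
    · rw [Pi.single_eq_of_ne he, totalDegree_zero]
      exact Nat.zero_le _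
  rw [h.tetraIntegral_bubbleDiv, neg_eq_zero, Finset.sum_eq_single ij, Pi.single_eq_same, ← hq]
    at h1
  · have h2 := h.eq_zero_of_integral_eq_zero _ (fun y hy => by
      have hl := (h.mem_tetra_iff y).mp hy
      simp only [map_mul]
      rw [mul_assoc]
      exact mul_nonneg (mul_nonneg (hl _) (hl _)) (mul_self_nonneg _)) h1
    have hlam : ∀ m, lam m ≠ 0 := fun m h0 => by
      have := h.delta m m
      simp [h0] at this
    simpa [hlam] using h2
  · intro e _ he
    rw [Pi.single_eq_of_ne he, mul_zero, zero_mul, map_zero]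
  · simp

/-- Stable right inverse of the divergence on the edge-bubble space: every
polynomial vector field of degree ≤ k−1 orthogonal to rigid motions on `K` is
the divergence of an edge bubble `τ ∈ Σ_{K,b}`, with
`‖τ‖_{L²(K)} + ‖div τ‖_{L²(K)} ≤ C ‖v‖_{L²(K)}`. -/
theorem bubble_divergence_onto_with_stability
    (x : Fin 4 → Fin 3 → ℝ)
    (hx : LinearIndependent ℝ ![x 1 - x 0, x 2 - x 0, x 3 - x 0])
    (lam : Fin 4 → MvPolynomial (Fin 3) ℝ)
    (hlamdeg : ∀ m, (lam m).totalDegree ≤ 1)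
    (hdelta : ∀ m l, eval (x l) (lam m) = if m = l then 1 else 0)
    (k : ℕ) (hk : 4 ≤ k) :
    ∃ C : ℝ, 0 < C ∧
      ∀ v : Fin 3 → MvPolynomial (Fin 3) ℝ,
        (∀ l, (v l).totalDegree ≤ k - 1) →
        (∀ (a : Fin 3 → ℝ) (W : Matrix (Fin 3) (Fin 3) ℝ), Wᵀ = -W →
          ∫ y in convexHull ℝ {x 0, x 1, x 2, x 3},
            (∑ l, eval y (v l) * (a l + (W *ᵥ y) l)) = 0) →
        ∃ p : {q : Fin 4 × Fin 4 // q.1 < q.2} → MvPolynomial (Fin 3) ℝ,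
          (∀ ij, (p ij).totalDegree ≤ k - 2) ∧
          (∀ y ∈ convexHull ℝ {x 0, x 1, x 2, x 3}, ∀ l : Fin 3,
            eval y (bubbleDiv x lam p l) = eval y (v l)) ∧
          Real.sqrt (∫ y in convexHull ℝ {x 0, x 1, x 2, x 3},
              ∑ l : Fin 3, ∑ m : Fin 3, (eval y (bubbleEntry x lam p l m)) ^ 2) +
            Real.sqrt (∫ y in convexHull ℝ {x 0, x 1, x 2, x 3},
              ∑ l : Fin 3, (eval y (bubbleDiv x lam p l)) ^ 2)
          ≤ C * Real.sqrt (∫ y in convexHull ℝ {x 0, x 1, x 2, x 3},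
              ∑ l : Fin 3, (eval y (v l)) ^ 2) := by
  have h : IsBarycentric x lam := ⟨hx, hlamdeg, hdelta⟩
  let core : InnerProductSpace.Core ℝ (PolyField (k - 1)) := polyFieldCore h (k - 1)
  let : NormedAddCommGroup (PolyField (k - 1)) := core.toNormedAddCommGroup
  let : InnerProductSpace ℝ (PolyField (k - 1)) := InnerProductSpace.ofCore core.toCore
  have hinner : ∀ v w : PolyField (k - 1), inner ℝ v w =
      tetraIntegral x (∑ l, (v l : MvPolynomial (Fin 3) ℝ) * w l) := fun _ _ => rfl
  let ι := (Submodule.subtype (restrictTotalDegree (Fin 3) ℝ (k - 2))).compLeft Edge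
  obtain ⟨M, hM, hpre⟩ := exists_stable_preimage (bubbleDivRestrict h hk)
    {r | ∃ (a : Fin 3 → ℝ) (W : Matrix (Fin 3) (Fin 3) ℝ), Wᵀ = -W ∧
      (fun l => (r l : MvPolynomial (Fin 3) ℝ)) = rigid a W}
    (by
      rintro p r ⟨a, W, hW, hr⟩
      rw [hinner]
      simp only [bubbleDivRestrict_apply]
      rw [h.tetraIntegral_bubbleDiv, hr]
      simp [strain_rigid _ a hW])
    (by
      intro w hw
      refine h.eq_rigid_of_orthogonal (n := k - 2) _ (fun l => ?_) fun p hp => ?_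
      · have := (mem_restrictTotalDegree _ _ _).mp (w l).2
        omega
      · have := hw fun ij => ⟨p ij, (mem_restrictTotalDegree _ _ _).mpr (hp ij)⟩
        rw [hinner] at this
        simpa only [bubbleDivRestrict_apply] using this)
    ((bubbleGram x lam).compl₁₂ ι ι)
  refine ⟨M + 1, by linarith, fun v hv horth => ?_⟩
  let v' : PolyField (k - 1) := fun l => ⟨v l, (mem_restrictTotalDegree _ _ _).mpr (hv l)⟩
  have hnorm : ‖v'‖ = Real.sqrt (∫ y in tetra x, ∑ l : Fin 3, (eval y (v l)) ^ 2) := by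
    rw [norm_eq_sqrt_real_inner, hinner, tetraIntegral_apply]
    simp only [map_sum, map_mul, sq]
    rfl
  obtain ⟨p, hp, hbound⟩ := hpre v' (by
    rintro r ⟨a, W, hW, hr⟩
    rw [hinner, ← horth a W hW, tetraIntegral_apply]
    have hr' : ∀ l, (r l : MvPolynomial (Fin 3) ℝ) = rigid a W l := fun l => congrFun hr l
    simp only [map_sum, map_mul, hr', eval_rigid]
    rfl)
  have hdiv : ∀ l, bubbleDiv x lam (fun ij => (p ij : MvPolynomial (Fin 3) ℝ)) l = v l := by
    intro l
    rw [← bubbleDivRestrict_apply h hk, hp]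
  refine ⟨fun ij => p ij, fun ij => (mem_restrictTotalDegree _ _ _).mp (p ij).2,
    fun y _ l => by rw [hdiv], ?_⟩
  simp only [hdiv]
  rw [hnorm] at hbound
  have hgram := bubbleGram_self x lam fun ij => (p ij : MvPolynomial (Fin 3) ℝ)
  rw [← hgram]
  rw [add_mul, one_mul]
  exact add_le_add_left hbound _
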